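/- arXiv:2307.07809 — 2 statements merged into one kernel-verified Lean document; each statement's English description precedes it below -/
import Mathlib

section
/- Let G be the hosohedral-type group associated to pairs (m_1,ℓ_1),…,(m_h,ℓ_h), let Δ be the common image of the s_j(0,ℓ_j), let p be a nonzero integer and q an integer, and let x, y ∈ G satisfy x^p = Δ^q and y^p = Δ^q. Then x and y are conjugate in G if and only if there exists j ∈ {1,…,h} such that some conjugate of x and some conjugate of y both lie in the j-th factor subgroup of G. -/
/-- The word `a_{j,i} a_{j,i+1} ⋯ a_{j,i+p-1}` (second indices mod `m j`) in the free group
on the disjoint union of the `ZMod (m j)`. -/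
def hosoWord (h : ℕ) (m : Fin h → ℕ) (j : Fin h) (i : ZMod (m j)) (p : ℕ) :
    FreeGroup (Σ j : Fin h, ZMod (m j)) :=
  ((List.range p).map (fun k => FreeGroup.of ⟨j, i + (k : ZMod (m j))⟩)).prod

/-- The defining relations of the hosohedral-type group associated to the pairs
`(m j, ℓ j)`: the circular relations `s_j(i, ℓ j) = s_j(i+1, ℓ j)` within each factor,
together with the identifications `s_j(0, ℓ j) = s_j'(0, ℓ j')` of the Garside elements. -/
def hosoRels (h : ℕ) (m ℓ : Fin h → ℕ) : Set (FreeGroup (Σ j : Fin h, ZMod (m j))) :=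
  { r | (∃ (j : Fin h) (i : ZMod (m j)),
          r = hosoWord h m j i (ℓ j) * (hosoWord h m j (i + 1) (ℓ j))⁻¹) ∨
        (∃ j j' : Fin h, r = hosoWord h m j 0 (ℓ j) * (hosoWord h m j' 0 (ℓ j'))⁻¹) }

/-- The hosohedral-type group associated to the pairs `(m j, ℓ j)`. -/
abbrev HosoGroup (h : ℕ) (m ℓ : Fin h → ℕ) := PresentedGroup (hosoRels h m ℓ)

/-- The generator `a_{j,i}` of the hosohedral-type group. -/
def hosoGen (h : ℕ) (m ℓ : Fin h → ℕ) (j : Fin h) (i : ZMod (m j)) : HosoGroup h m ℓ :=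
  PresentedGroup.of ⟨j, i⟩

/-- The element `s_j(i,p) = a_{j,i} a_{j,i+1} ⋯ a_{j,i+p-1}` of the hosohedral-type group. -/
def hosoS (h : ℕ) (m ℓ : Fin h → ℕ) (j : Fin h) (i : ZMod (m j)) (p : ℕ) :
    HosoGroup h m ℓ :=
  ((List.range p).map (fun k => hosoGen h m ℓ j (i + (k : ZMod (m j))))).prod

/-- The Garside element `Δ` of the hosohedral-type group, as the image of `s_j(0, ℓ j)`
(this is independent of `j` by the defining relations). -/
def hosoDelta (h : ℕ) (m ℓ : Fin h → ℕ) (j : Fin h) : HosoGroup h m ℓ :=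
  hosoS h m ℓ j 0 (ℓ j)

/-- The `j`-th factor subgroup of the hosohedral-type group, generated by the
generators `a_{j,0}, …, a_{j, m_j - 1}`. -/
def hosoFactor (h : ℕ) (m ℓ : Fin h → ℕ) (j : Fin h) : Subgroup (HosoGroup h m ℓ) :=
  Subgroup.closure (Set.range (hosoGen h m ℓ j))

/-!
Adjoin to the group `G` the rotation `t`, with `t a_{j,i} t⁻¹ = a_{j,i+1}`, and put
`b_j = a_{j,0} t`. The relations of `G ⋊ ⟨t⟩` become `Δ t = t Δ`, `b_j t ^ m_j = t ^ m_j b_j` and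
`b_j ^ ℓ_j = Δ t ^ ℓ_j`, which exhibits it as a tree of groups `ℤ²` with hub `⟨Δ, t⟩` and leaves
`⟨b_j, t ^ m_j⟩`. If `x ^ p = Δ ^ q` with `p ≠ 0`, some power of `x` with nonzero exponent is
central in this tree of groups, so by cyclic reduction `x` is conjugate into a vertex group. The
elements of the vertex groups that lie in `G` are the `b_j ^ e t ^ (-e)` with `m_j ∣ e` or
`ℓ_j ∣ e`, the latter being the powers of `Δ`. Each of them commutes with an element of `G ⋊ ⟨t⟩`
with rotation part `t`, so the conjugation can be carried out in `G`. The exponent `e` is `ℓ_j`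
times the length of `x`, normalized by giving `Δ` length one, which is `q / p`; hence periodic
elements of this form with the same `j` are equal. If one of them is conjugate into another factor,
counting the letters `a_{j,i}` modulo `ℓ_j` gives `ℓ_j ∣ e`, so it is a power of `Δ` and has this
form for every index.
-/

section Amalgam

open Monoid PushoutI

open List (IsRotated)

variable {ι : Type*} {G : ι → Type*} {H : Type*} [∀ i, Group (G i)] [Group H]
  {φ : ∀ i, H →* G i}

/-- The element of an amalgamated product spelled by a list of letters of the factors. -/
def letterProd (φ : ∀ i, H →* G i) (L : List (Σ i, G i)) : PushoutI φ :=
  (L.map fun g => of g.1 g.2).prod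

theorem letterProd_cons (g : Σ i, G i) (L : List (Σ i, G i)) :
    letterProd φ (g :: L) = of g.1 g.2 * letterProd φ L := by
  simp [letterProd]

theorem letterProd_append (L M : List (Σ i, G i)) :
    letterProd φ (L ++ M) = letterProd φ L * letterProd φ M := by
  simp [letterProd]

theorem letterProd_flatten_replicate (L : List (Σ i, G i)) (n : ℕ) :
    letterProd φ (List.replicate n L).flatten = letterProd φ L ^ n := by
  simp [letterProd, List.map_flatten, List.prod_flatten]

theorem letterProd_surjective [Nonempty ι] : Function.Surjective (letterProd φ) := by
  intro x
  induction x using induction_on with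
  | of i g => exact ⟨[⟨i, g⟩], by simp [letterProd]⟩
  | base c =>
    obtain ⟨i⟩ := ‹Nonempty ι›
    exact ⟨[⟨i, φ i c⟩], by simp [letterProd, of_apply_eq_base]⟩
  | mul x y hx hy =>
    obtain ⟨L, rfl⟩ := hx
    obtain ⟨M, rfl⟩ := hy
    exact ⟨L ++ M, letterProd_append L M⟩

theorem isConj_letterProd_of_isRotated {L M : List (Σ i, G i)} (h : L ~r M) :
    IsConj (letterProd φ L) (letterProd φ M) := by
  obtain ⟨n, -, rfl⟩ := List.isRotated_iff_mod.1 h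
  rw [List.rotate_eq_drop_append_take_mod, letterProd_append]
  nth_rw 1 [← List.take_append_drop (n % L.length) L, letterProd_append]
  exact isConj_iff.2 ⟨(letterProd φ (L.take (n % L.length)))⁻¹, by group⟩

theorem letterProd_notMem_range_base (hφ : ∀ i, Function.Injective (φ i)) {L : List (Σ i, G i)}
    (hne : L ≠ []) (hletters : ∀ g ∈ L, g.2 ∉ (φ g.1).range)
    (hchain : L.IsChain fun g g' => g.1 ≠ g'.1) : letterProd φ L ∉ (base φ).range := by
  intro hmem
  let w : CoprodI.Word G := ⟨L, fun g hg h1 => hletters g hg (h1 ▸ one_mem _), hchain⟩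
  have hprod : ofCoprodI w.prod = letterProd φ L := by
    simp [CoprodI.Word.prod, letterProd, w, map_list_prod, Function.comp_def]
  have hempty : w = CoprodI.Word.empty :=
    Reduced.eq_empty_of_mem_range hφ (w := w) hletters (hprod ▸ hmem)
  exact hne (congrArg CoprodI.Word.toList hempty)

/-- A list of letters is cyclically reduced if no letter, in cyclic order, can be merged with its
successor. The empty list and the lists of length one are cyclically reduced in this sense. -/
def IsCyclicallyReduced (φ : ∀ i, H →* G i) (L : List (Σ i, G i)) : Prop :=
  ∀ ⦃a b s⦄, L ~r a :: b :: s → a.1 ≠ b.1 ∧ a.2 ∉ (φ a.1).range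

theorem exists_isConj_letterProd_length_lt {L : List (Σ i, G i)}
    (hL : ¬IsCyclicallyReduced φ L) :
    ∃ M, M.length < L.length ∧ IsConj (letterProd φ L) (letterProd φ M) := by
  simp only [IsCyclicallyReduced, not_forall] at hL
  obtain ⟨⟨i, a⟩, ⟨j, b⟩, s, hrot, hmerge⟩ := hL
  suffices ∃ c : G j, of i a * of j b = (of j c : PushoutI φ) by
    obtain ⟨c, hc⟩ := this
    refine ⟨⟨j, c⟩ :: s, by simp [hrot.perm.length_eq], ?_⟩
    rw [letterProd_cons, ← hc, mul_assoc, ← letterProd_cons ⟨j, b⟩, ← letterProd_cons ⟨i, a⟩]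
    exact isConj_letterProd_of_isRotated hrot
  by_cases hij : i = j
  · subst hij
    exact ⟨a * b, (map_mul _ _ _).symm⟩
  · obtain ⟨c, rfl⟩ : a ∈ (φ i).range := by simpa [hij] using hmerge
    exact ⟨φ j c * b, by rw [map_mul, of_apply_eq_base, of_apply_eq_base]⟩

theorem exists_isCyclicallyReduced_isConj [Nonempty ι] (x : PushoutI φ) :
    ∃ L, IsCyclicallyReduced φ L ∧ IsConj x (letterProd φ L) := by
  obtain ⟨L, rfl⟩ := letterProd_surjective x
  induction hn : L.length using Nat.strong_induction_on generalizing L with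
  | _ n ih =>
    subst hn
    by_cases hL : IsCyclicallyReduced φ L
    · exact ⟨L, hL, IsConj.refl _⟩
    · obtain ⟨M, hlt, hLM⟩ := exists_isConj_letterProd_length_lt hL
      obtain ⟨M', hM', hMM'⟩ := ih _ hlt M rfl
      exact ⟨M', hM', hLM.trans hMM'⟩

namespace IsCyclicallyReduced

variable {L : List (Σ i, G i)}

theorem notMem_range (hL : IsCyclicallyReduced φ L) (hlen : 1 < L.length) {g : Σ i, G i}
    (hg : g ∈ L) : g.2 ∉ (φ g.1).range := by
  obtain ⟨s, t, rfl⟩ := List.append_of_mem hg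
  have hrot : s ++ g :: t ~r g :: (t ++ s) := List.isRotated_append
  cases hts : t ++ s with
  | nil => simp_all
  | cons b r => exact (hL (hts ▸ hrot)).2

theorem isChain (hL : IsCyclicallyReduced φ L) : L.IsChain fun g g' => g.1 ≠ g'.1 := by
  rw [List.isChain_iff_forall_rel_of_append_cons_cons]
  rintro a b s t rfl
  exact (hL List.isRotated_append).1

theorem getLast_ne_head (hL : IsCyclicallyReduced φ L) (hlen : 1 < L.length) :
    ∀ᵉ (a ∈ L.getLast?) (b ∈ L.head?), a.1 ≠ b.1 := by
  intro a ha b hb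
  obtain ⟨s, rfl⟩ := List.getLast?_eq_some_iff.1 ha
  obtain ⟨c, t, rfl⟩ := List.exists_cons_of_ne_nil (l := s) (by rintro rfl; simp at hlen)
  obtain rfl : c = b := by simpa using hb
  exact (hL (List.isRotated_append (l := c :: t) (l' := [a]))).1

/-- Powers of a cyclically reduced word are reduced words. -/
theorem letterProd_pow_notMem_range_base (hφ : ∀ i, Function.Injective (φ i))
    (hL : IsCyclicallyReduced φ L) (hlen : 1 < L.length) {n : ℕ} (hn : n ≠ 0) :
    letterProd φ L ^ n ∉ (base φ).range := by
  have hne : L ≠ [] := List.ne_nil_of_length_pos (by omega)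
  rw [← letterProd_flatten_replicate]
  refine letterProd_notMem_range_base hφ (by simp [hn, hne]) (fun g hg => ?_) ?_
  · obtain ⟨_, hmem, hg⟩ := List.mem_flatten.1 hg
    exact hL.notMem_range hlen (List.eq_of_mem_replicate hmem ▸ hg)
  · rw [List.isChain_flatten (by simp [hne.symm])]
    exact ⟨fun M hM => List.eq_of_mem_replicate hM ▸ hL.isChain,
      List.isChain_replicate_of_rel _ (hL.getLast_ne_head hlen)⟩

end IsCyclicallyReduced

theorem exists_isConj_of_of_zpow_mem_normalCore [Nonempty ι]
    (hφ : ∀ i, Function.Injective (φ i)) {x : PushoutI φ} {p : ℤ} (hp : p ≠ 0)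
    (hx : x ^ p ∈ (base φ).range.normalCore) : ∃ (i : ι) (g : G i), IsConj x (of i g) := by
  obtain ⟨L, hL, hxL⟩ := exists_isCyclicallyReduced_isConj x
  have hpow : letterProd φ L ^ p ∈ (base φ).range := by
    obtain ⟨c, hc⟩ := isConj_iff.1 hxL
    rw [← hc, conj_zpow]
    exact hx c
  match L with
  | [] =>
    obtain ⟨i⟩ := ‹Nonempty ι›
    exact ⟨i, 1, by simpa [letterProd] using hxL⟩
  | [g] => exact ⟨g.1, g.2, by simpa [letterProd] using hxL⟩
  | g :: g' :: L =>
    refine absurd ?_ (hL.letterProd_pow_notMem_range_base hφ (by simp) (Int.natAbs_ne_zero.2 hp))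
    rw [← zpow_natCast]
    rcases Int.natAbs_eq p with h | h
    · rwa [← h]
    · rwa [h, zpow_neg, inv_mem_iff] at hpow

theorem base_mem_center {c : H} (hc : c ∈ Subgroup.center H)
    (hφc : ∀ i, φ i c ∈ Subgroup.center (G i)) : base φ c ∈ Subgroup.center (PushoutI φ) := by
  rw [Subgroup.mem_center_iff]
  intro x
  induction x using induction_on with
  | of i g => rw [← of_apply_eq_base φ i, ← map_mul, ← map_mul, Subgroup.mem_center_iff.1 (hφc i)]
  | base k => rw [← map_mul, ← map_mul, Subgroup.mem_center_iff.1 hc]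
  | mul x y hx hy => rw [mul_assoc, hy, ← mul_assoc, hx, mul_assoc]

theorem exists_isConj_of_of_zpow_eq_base [Nonempty ι] (hφ : ∀ i, Function.Injective (φ i))
    {x : PushoutI φ} {p : ℤ} (hp : p ≠ 0) {c : H} (hc : base φ c ∈ Subgroup.center (PushoutI φ))
    (hx : x ^ p = base φ c) : ∃ (i : ι) (g : G i), IsConj x (of i g) := by
  refine exists_isConj_of_of_zpow_mem_normalCore hφ hp (hx ▸ fun g => ?_)
  rw [Subgroup.mem_center_iff.1 hc, mul_inv_cancel_right]
  exact ⟨c, rfl⟩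

end Amalgam

section CyclicProd

variable {K : Type*} {n : ℕ}

/-- The product `f i * f (i + 1) * ⋯ * f (i + p - 1)` of a family indexed by `ZMod n`, which is the
common shape of the words defining hosohedral-type groups and of their images. -/
def cyclicProd [Monoid K] (f : ZMod n → K) (i : ZMod n) (p : ℕ) : K :=
  ((List.range p).map fun k : ℕ => f (i + k)).prod

theorem map_cyclicProd {F M : Type*} [Monoid K] [Monoid M] [FunLike F K M] [MonoidHomClass F K M]
    (g : F) (f : ZMod n → K) (i : ZMod n) (p : ℕ) :
    g (cyclicProd f i p) = cyclicProd (fun j => g (f j)) i p := by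
  simp [cyclicProd, map_list_prod, Function.comp_def]

theorem cyclicProd_const [Monoid K] (a : K) (i : ZMod n) (p : ℕ) :
    cyclicProd (fun _ => a) i p = a ^ p := by
  simp [cyclicProd]

theorem cyclicProd_shift [Monoid K] (f : ZMod n → K) (c i : ZMod n) (p : ℕ) :
    cyclicProd (fun j => f (j + c)) i p = cyclicProd f (i + c) p := by
  simp only [cyclicProd, add_right_comm]

theorem cyclicProd_of_intCast_eq [Group K] {f : ZMod n → K} {t b : K}
    (hf : ∀ i : ℤ, f i = t ^ i * b * t ^ (-i - 1)) (i : ℤ) (p : ℕ) :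
    cyclicProd f i p = t ^ i * b ^ p * t ^ (-i - p) := by
  induction p with
  | zero => simp [cyclicProd]
  | succ p ih =>
    have hsucc : cyclicProd f i (p + 1) = cyclicProd f i p * f (i + p : ℤ) := by
      simp [cyclicProd, List.prod_range_succ]
    rw [hsucc, ih, hf, pow_succ]
    push_cast
    group

theorem zpow_mul_mul_zpow_eq_of_intCast_eq [Group K] {t b : K} (hb : Commute b (t ^ n)) {i i' : ℤ}
    (hi : (i : ZMod n) = i') : t ^ i * b * t ^ (-i - 1) = t ^ i' * b * t ^ (-i' - 1) := by
  obtain ⟨k, hk⟩ := (ZMod.intCast_eq_intCast_iff_dvd_sub i i' n).1 hi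
  obtain rfl : i' = i + n * k := by omega
  have hcomm : Commute (t ^ (n * k : ℤ)) b := by
    rw [zpow_mul, zpow_natCast]
    exact (hb.zpow_right k).symm
  rw [zpow_add t i, mul_assoc (t ^ i) _ b, hcomm.eq]
  group

end CyclicProd

section PairHom

variable {K : Type*} [Group K]

/-- The group `ℤ²`, written multiplicatively. -/
abbrev IntPair := Multiplicative ℤ × Multiplicative ℤ

/-- The homomorphism `(a, c) ↦ u ^ a * v ^ c` from `ℤ²` given by a commuting pair. -/
def pairHom {u v : K} (huv : Commute u v) : IntPair →* K :=
  (zpowersHom K u).noncommCoprod (zpowersHom K v) fun a c => huv.zpow_zpow a.toAdd c.toAdd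

theorem pairHom_apply {u v : K} (huv : Commute u v) (c : IntPair) :
    pairHom huv c = u ^ c.1.toAdd * v ^ c.2.toAdd :=
  rfl

end PairHom

theorem right_eq_one_of_isConj_inl {N G : Type*} [Group N] [Group G] {φ : G →* MulAut N}
    {x : N} {u : N ⋊[φ] G} (hxu : IsConj (.inl x) u) : u.right = 1 := by
  have := SemidirectProduct.rightHom.map_isConj hxu
  rwa [SemidirectProduct.rightHom_inl, isConj_one_right] at this

theorem isConj_of_isConj_inl {N G : Type*} [Group N] [Group G] {φ : G →* MulAut N} {x z : N}
    (hxz : IsConj (SemidirectProduct.inl x : N ⋊[φ] G) (.inl z))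
    (hz : ∀ g : G, ∃ w : N ⋊[φ] G, w.right = g ∧ Commute w (.inl z)) : IsConj x z := by
  obtain ⟨c, hc⟩ := isConj_iff.1 hxz
  obtain ⟨w, hw, hwz⟩ := hz c.right
  have hright : (w⁻¹ * c).right = 1 := by simp [hw]
  have hleft : w⁻¹ * c = .inl (w⁻¹ * c).left := by
    rw [← SemidirectProduct.inl_left_mul_inr_right (w⁻¹ * c), hright]
    simp
  refine isConj_iff.2 ⟨(w⁻¹ * c).left, SemidirectProduct.inl_injective (φ := φ) ?_⟩
  rw [map_mul, map_mul, map_inv, ← hleft]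
  calc w⁻¹ * c * .inl x * (w⁻¹ * c)⁻¹ = w⁻¹ * (c * .inl x * c⁻¹) * w := by group
    _ = .inl z := by rw [hc, mul_assoc, ← hwz.eq, inv_mul_cancel_left]

section Hoso

open Multiplicative

variable {h : ℕ} {m ℓ : Fin h → ℕ}

theorem hosoS_eq_cyclicProd (j : Fin h) (i : ZMod (m j)) (p : ℕ) :
    hosoS h m ℓ j i p = cyclicProd (hosoGen h m ℓ j) i p := by
  simp [hosoS, cyclicProd, ← List.map_eq_flatMap, Function.comp_def]

theorem mk_hosoWord (j : Fin h) (i : ZMod (m j)) (p : ℕ) :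
    PresentedGroup.mk (hosoRels h m ℓ) (hosoWord h m j i p) = hosoS h m ℓ j i p := by
  rw [hosoS_eq_cyclicProd]
  exact map_cyclicProd _ (fun k => FreeGroup.of (⟨j, k⟩ : Σ j : Fin h, ZMod (m j))) i p

theorem hosoS_eq_hosoDelta (j j₀ : Fin h) (i : ZMod (m j)) :
    hosoS h m ℓ j i (ℓ j) = hosoDelta h m ℓ j₀ := by
  have hadd_one (i : ZMod (m j)) : hosoS h m ℓ j i (ℓ j) = hosoS h m ℓ j (i + 1) (ℓ j) := by
    rw [← mk_hosoWord, ← mk_hosoWord]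
    exact PresentedGroup.mk_eq_mk_of_mul_inv_mem (.inl ⟨j, i, rfl⟩)
  obtain ⟨n, rfl⟩ := ZMod.intCast_surjective i
  induction n using Int.induction_on with
  | zero =>
    rw [hosoDelta, ← mk_hosoWord, ← mk_hosoWord, Int.cast_zero]
    exact PresentedGroup.mk_eq_mk_of_mul_inv_mem (.inr ⟨j, j₀, rfl⟩)
  | succ n ih => rw [Int.cast_add, Int.cast_one, ← hadd_one, ih]
  | pred n ih => rw [hadd_one]; simpa using ih

theorem hosoS_mem_hosoFactor (j : Fin h) (i : ZMod (m j)) (p : ℕ) :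
    hosoS h m ℓ j i p ∈ hosoFactor h m ℓ j := by
  rw [hosoS_eq_cyclicProd]
  refine list_prod_mem fun x hx => ?_
  obtain ⟨k, -, rfl⟩ := List.mem_map.1 hx
  exact Subgroup.subset_closure ⟨_, rfl⟩

section Lift

variable {K : Type*} [Group K]

/-- The homomorphism out of a hosohedral-type group given by the images of the generators. -/
def hosoLift (f : ∀ j, ZMod (m j) → K)
    (hf : ∀ j j' i i', cyclicProd (f j) i (ℓ j) = cyclicProd (f j') i' (ℓ j')) :
    HosoGroup h m ℓ →* K :=
  PresentedGroup.toGroup (f := fun g : Σ j : Fin h, ZMod (m j) => f g.1 g.2) <| by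
    have hword (j : Fin h) (i : ZMod (m j)) :
        FreeGroup.lift (fun g : Σ j : Fin h, ZMod (m j) => f g.1 g.2) (hosoWord h m j i (ℓ j)) =
          cyclicProd (f j) i (ℓ j) := by
      simp [hosoWord, cyclicProd, map_list_prod, Function.comp_def]
    rintro _ (⟨j, i, rfl⟩ | ⟨j, j', rfl⟩) <;>
      rw [map_mul, map_inv, hword, hword, mul_inv_eq_one] <;>
      exact hf _ _ _ _

theorem hosoLift_hosoGen (f : ∀ j, ZMod (m j) → K)
    (hf : ∀ j j' i i', cyclicProd (f j) i (ℓ j) = cyclicProd (f j') i' (ℓ j'))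
    (j : Fin h) (i : ZMod (m j)) : hosoLift f hf (hosoGen h m ℓ j i) = f j i :=
  PresentedGroup.toGroup.of _

theorem hosoHom_ext {f g : HosoGroup h m ℓ →* K}
    (hfg : ∀ j i, f (hosoGen h m ℓ j i) = g (hosoGen h m ℓ j i)) : f = g :=
  PresentedGroup.ext fun x => hfg x.1 x.2

theorem map_hosoS (f : HosoGroup h m ℓ →* K) (j : Fin h) (i : ZMod (m j)) (p : ℕ) :
    f (hosoS h m ℓ j i p) = cyclicProd (fun k => f (hosoGen h m ℓ j k)) i p := by
  rw [hosoS_eq_cyclicProd, map_cyclicProd]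

end Lift

/-- The endomorphism `a_{j,i} ↦ a_{j,i+c}`. -/
def hosoShift (m ℓ : Fin h → ℕ) (c : ℤ) : HosoGroup h m ℓ →* HosoGroup h m ℓ :=
  hosoLift (fun j i => hosoGen h m ℓ j (i + c)) fun j j' i i' => by
    rw [cyclicProd_shift, cyclicProd_shift, ← hosoS_eq_cyclicProd, ← hosoS_eq_cyclicProd,
      hosoS_eq_hosoDelta j j, hosoS_eq_hosoDelta j' j]

theorem hosoShift_hosoGen (c : ℤ) (j : Fin h) (i : ZMod (m j)) :
    hosoShift m ℓ c (hosoGen h m ℓ j i) = hosoGen h m ℓ j (i + c) :=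
  hosoLift_hosoGen _ _ j i

/-- The action of `ℤ` on a hosohedral-type group by the automorphisms `a_{j,i} ↦ a_{j,i+c}`. -/
def hosoRotation (m ℓ : Fin h → ℕ) : Multiplicative ℤ →* MulAut (HosoGroup h m ℓ) :=
  MonoidHom.mk' (fun c => MonoidHom.toMulEquiv (hosoShift m ℓ c.toAdd) (hosoShift m ℓ (-c.toAdd))
      (hosoHom_ext fun j i => by simp [hosoShift_hosoGen])
      (hosoHom_ext fun j i => by simp [hosoShift_hosoGen]))
    fun c d => MulEquiv.toMonoidHom_injective <| hosoHom_ext fun j i => by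
      simp [hosoShift_hosoGen, add_assoc, add_comm (c.toAdd : ZMod (m j))]

theorem hosoRotation_hosoGen (c : Multiplicative ℤ) (j : Fin h) (i : ZMod (m j)) :
    hosoRotation m ℓ c (hosoGen h m ℓ j i) = hosoGen h m ℓ j (i + c.toAdd) :=
  hosoShift_hosoGen _ j i

/-- Elements `t`, `D` and `b j` of a group satisfy the relations of the semidirect product of a
hosohedral-type group with its rotation `t`, where `D` stands for the Garside element and `b j` for
`a_{j,0} t`. -/
structure IsRotationSystem (m ℓ : Fin h → ℕ) {K : Type*} [Group K] (t D : K) (b : Fin h → K) :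
    Prop where
  commute_delta : Commute D t
  commute_pow : ∀ j, Commute (b j) (t ^ m j)
  pow_eq : ∀ j, b j ^ ℓ j = D * t ^ ℓ j

namespace IsRotationSystem

variable {K : Type*} [Group K] {t D : K} {b : Fin h → K}

theorem pow_mul_zpow_neg (hs : IsRotationSystem m ℓ t D b) (j : Fin h) :
    b j ^ ℓ j * t ^ (-ℓ j : ℤ) = D := by
  rw [hs.pow_eq, zpow_neg, zpow_natCast, mul_inv_cancel_right]

/-- The homomorphism `a_{j,i} ↦ t ^ i (b_j t⁻¹) t ^ (-i)`. -/
def hom (hs : IsRotationSystem m ℓ t D b) : HosoGroup h m ℓ →* K :=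
  hosoLift (fun j i => t ^ (i.cast : ℤ) * b j * t ^ (-(i.cast : ℤ) - 1)) <| by
    suffices ∀ (j : Fin h) (i : ZMod (m j)), cyclicProd (fun i : ZMod (m j) =>
        t ^ (i.cast : ℤ) * b j * t ^ (-(i.cast : ℤ) - 1)) i (ℓ j) = D from
      fun j j' i i' => (this j i).trans (this j' i').symm
    intro j i
    obtain ⟨n, rfl⟩ := ZMod.intCast_surjective i
    rw [cyclicProd_of_intCast_eq (t := t) (b := b j) fun i =>
        zpow_mul_mul_zpow_eq_of_intCast_eq (hs.commute_pow j) (by simp),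
      sub_eq_neg_add, zpow_add, ← mul_assoc, mul_assoc (t ^ n), hs.pow_mul_zpow_neg,
      ← (hs.commute_delta.zpow_right n).eq, zpow_neg, mul_inv_cancel_right]

theorem hom_hosoGen (hs : IsRotationSystem m ℓ t D b) (j : Fin h) (i : ℤ) :
    hs.hom (hosoGen h m ℓ j i) = t ^ i * b j * t ^ (-i - 1) :=
  (hosoLift_hosoGen _ _ j _).trans (zpow_mul_mul_zpow_eq_of_intCast_eq (hs.commute_pow j) (by simp))

theorem hom_hosoDelta (hs : IsRotationSystem m ℓ t D b) (j : Fin h) :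
    hs.hom (hosoDelta h m ℓ j) = D := by
  rw [hosoDelta, map_hosoS, ← Int.cast_zero, cyclicProd_of_intCast_eq (hs.hom_hosoGen j),
    zpow_zero, one_mul, neg_zero, zero_sub, hs.pow_mul_zpow_neg]

end IsRotationSystem

open Monoid

/-- The two inclusions of the edge group `ℤ² = ⟨b ^ ℓ, t ^ m⟩`: into `⟨b, t ^ m⟩` for `true`, and
into `⟨D, t⟩` for `false`, where `b ^ ℓ = D t ^ ℓ`. -/
def circularEdge (m ℓ : ℕ) : Bool → IntPair →* IntPair
  | true => pairHom (u := (ofAdd (ℓ : ℤ), 1)) (v := (1, ofAdd 1)) (.all _ _)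
  | false => pairHom (u := (ofAdd 1, ofAdd (ℓ : ℤ))) (v := (1, ofAdd (m : ℤ))) (.all _ _)

theorem circularEdge_true_apply (m ℓ : ℕ) (c : IntPair) :
    circularEdge m ℓ true c = (c.1 ^ ℓ, c.2) := by
  ext <;> simp [circularEdge, pairHom_apply, mul_comm]

theorem circularEdge_false_apply (m ℓ : ℕ) (c : IntPair) :
    circularEdge m ℓ false c = (c.1, c.1 ^ ℓ * c.2 ^ m) := by
  ext <;> simp [circularEdge, pairHom_apply, mul_comm, add_comm]

theorem circularEdge_injective {m ℓ : ℕ} (hm : 0 < m) (hℓ : 0 < ℓ) (e : Bool) :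
    Function.Injective (circularEdge m ℓ e) := by
  refine (injective_iff_map_eq_one _).2 fun ⟨a, c⟩ hac => ?_
  cases e with
  | false =>
    obtain ⟨rfl, hc⟩ : a = 1 ∧ a ^ ℓ * c ^ m = 1 := by
      simpa [circularEdge_false_apply] using hac
    simpa [hm.ne'] using hc
  | true => simpa [circularEdge_true_apply, hℓ.ne'] using hac

theorem exists_circularEdge_false_eq {m : ℕ} (ℓ : ℕ) {a : ℤ} (ha : (m : ℤ) ∣ a) :
    ∃ c, circularEdge m ℓ false c = (ofAdd a, 1) := by
  obtain ⟨d, rfl⟩ := ha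
  refine ⟨(ofAdd (m * d), ofAdd (-(d * ℓ))), ?_⟩
  rw [circularEdge_false_apply, ← ofAdd_nsmul, ← ofAdd_nsmul, ← ofAdd_add]
  congr 2
  simp only [nsmul_eq_mul]
  ring

/-- The group `⟨D, t, b ∣ D t = t D, b t ^ m = t ^ m b, b ^ ℓ = D t ^ ℓ⟩`, as the amalgamated
product of `⟨b, t ^ m⟩ ≅ ℤ²` and `⟨D, t⟩ ≅ ℤ²` over `ℤ²`. -/
def CircularAmalgam (m ℓ : ℕ) := PushoutI (G := fun _ : Bool => IntPair) (circularEdge m ℓ)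

namespace CircularAmalgam

instance (m ℓ : ℕ) : Group (CircularAmalgam m ℓ) :=
  inferInstanceAs (Group (PushoutI (circularEdge m ℓ)))

/-- The inclusion of the vertex group `⟨b, t ^ m⟩`. -/
def leaf (m ℓ : ℕ) : IntPair →* CircularAmalgam m ℓ :=
  PushoutI.of (G := fun _ : Bool => IntPair) (φ := circularEdge m ℓ) true

/-- The inclusion of the vertex group `⟨D, t⟩`. -/
def hub (m ℓ : ℕ) : IntPair →* CircularAmalgam m ℓ :=
  PushoutI.of (G := fun _ : Bool => IntPair) (φ := circularEdge m ℓ) false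

theorem hub_circularEdge (m ℓ : ℕ) (c : IntPair) :
    hub m ℓ (circularEdge m ℓ false c) = PushoutI.base (circularEdge m ℓ) c :=
  PushoutI.of_apply_eq_base (G := fun _ : Bool => IntPair) _ false c

theorem leaf_circularEdge (m ℓ : ℕ) (c : IntPair) :
    leaf m ℓ (circularEdge m ℓ true c) = hub m ℓ (circularEdge m ℓ false c) := by
  rw [hub_circularEdge]
  exact PushoutI.of_apply_eq_base (G := fun _ : Bool => IntPair) _ true c

theorem hub_injective {m ℓ : ℕ} (hm : 0 < m) (hℓ : 0 < ℓ) : Function.Injective (hub m ℓ) :=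
  PushoutI.of_injective (circularEdge_injective hm hℓ) false

theorem hub_circularEdge_mem_center (m ℓ : ℕ) (c : IntPair) :
    hub m ℓ (circularEdge m ℓ false c) ∈ Subgroup.center (CircularAmalgam m ℓ) := by
  rw [hub_circularEdge]
  exact base_mem_center (G := fun _ : Bool => IntPair) (by simp [CommGroup.center_eq_top])
    fun _ => by simp [CommGroup.center_eq_top]

theorem exists_isConj_of_zpow_eq {m ℓ : ℕ} (hm : 0 < m) (hℓ : 0 < ℓ) {x : CircularAmalgam m ℓ}
    {p : ℤ} (hp : p ≠ 0) {c : IntPair} (hx : x ^ p = hub m ℓ (circularEdge m ℓ false c)) :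
    (∃ d, IsConj x (hub m ℓ d)) ∨ ∃ d, IsConj x (leaf m ℓ d) := by
  obtain ⟨_ | _, d, hd⟩ := exists_isConj_of_of_zpow_eq_base (circularEdge_injective hm hℓ) hp
    (hub_circularEdge m ℓ c ▸ hub_circularEdge_mem_center m ℓ c :)
    (hx.trans (hub_circularEdge m ℓ c))
  exacts [.inl ⟨d, hd⟩, .inr ⟨d, hd⟩]

/-- The homomorphism out of the amalgam given by compatible homomorphisms on the vertex groups. -/
def lift {m ℓ : ℕ} {K : Type*} [Group K] (u v : IntPair →* K)
    (huv : ∀ c, u (circularEdge m ℓ true c) = v (circularEdge m ℓ false c)) :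
    CircularAmalgam m ℓ →* K :=
  PushoutI.lift (φ := circularEdge m ℓ) (fun e => cond e u v) (v.comp (circularEdge m ℓ false)) fun
    | true => MonoidHom.ext huv
    | false => rfl

theorem lift_leaf {m ℓ : ℕ} {K : Type*} [Group K] (u v : IntPair →* K)
    (huv : ∀ c, u (circularEdge m ℓ true c) = v (circularEdge m ℓ false c)) (c : IntPair) :
    lift u v huv (leaf m ℓ c) = u c :=
  PushoutI.lift_of (φ := circularEdge m ℓ) (fun e => cond e u v) _ _ (i := true) c

theorem lift_hub {m ℓ : ℕ} {K : Type*} [Group K] (u v : IntPair →* K)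
    (huv : ∀ c, u (circularEdge m ℓ true c) = v (circularEdge m ℓ false c)) (c : IntPair) :
    lift u v huv (hub m ℓ c) = v c :=
  PushoutI.lift_of (φ := circularEdge m ℓ) (fun e => cond e u v) _ _ (i := false) c

end CircularAmalgam

/-- The group `⟨D, t, b_j ∣ D t = t D, b_j t ^ m_j = t ^ m_j b_j, b_j ^ ℓ_j = D t ^ ℓ_j⟩`, as the
amalgamated product of the circular amalgams over `⟨D, t⟩ ≅ ℤ²`. -/
def HosoAmalgam (m ℓ : Fin h → ℕ) :=
  PushoutI (G := fun j : Fin h => CircularAmalgam (m j) (ℓ j))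
    fun j => CircularAmalgam.hub (m j) (ℓ j)

namespace HosoAmalgam

instance (m ℓ : Fin h → ℕ) : Group (HosoAmalgam m ℓ) :=
  inferInstanceAs (Group (PushoutI fun j => CircularAmalgam.hub (m j) (ℓ j)))

/-- The inclusion of the `j`-th circular amalgam. -/
def factor (m ℓ : Fin h → ℕ) (j : Fin h) : CircularAmalgam (m j) (ℓ j) →* HosoAmalgam m ℓ :=
  PushoutI.of (φ := fun j => CircularAmalgam.hub (m j) (ℓ j)) j

/-- The inclusion of the vertex group `⟨D, t⟩`. -/
def hub (m ℓ : Fin h → ℕ) : IntPair →* HosoAmalgam m ℓ :=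
  PushoutI.base fun j => CircularAmalgam.hub (m j) (ℓ j)

/-- The inclusion of the vertex group `⟨b_j, t ^ m_j⟩`. -/
def leaf (m ℓ : Fin h → ℕ) (j : Fin h) : IntPair →* HosoAmalgam m ℓ :=
  (factor m ℓ j).comp (CircularAmalgam.leaf (m j) (ℓ j))

theorem factor_hub (j : Fin h) (c : IntPair) :
    factor m ℓ j (CircularAmalgam.hub (m j) (ℓ j) c) = hub m ℓ c :=
  PushoutI.of_apply_eq_base (fun j => CircularAmalgam.hub (m j) (ℓ j)) j c

theorem leaf_circularEdge (j : Fin h) (c : IntPair) :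
    leaf m ℓ j (circularEdge (m j) (ℓ j) true c) =
      hub m ℓ (circularEdge (m j) (ℓ j) false c) := by
  rw [leaf, MonoidHom.comp_apply, CircularAmalgam.leaf_circularEdge, factor_hub]

theorem factor_injective (hm : ∀ j, 0 < m j) (hℓ : ∀ j, 0 < ℓ j) (j : Fin h) :
    Function.Injective (factor m ℓ j) :=
  PushoutI.of_injective (fun j => CircularAmalgam.hub_injective (hm j) (hℓ j)) j

theorem hub_mem_center {c : IntPair}
    (hc : ∀ j, ∃ d, circularEdge (m j) (ℓ j) false d = c) :
    hub m ℓ c ∈ Subgroup.center (HosoAmalgam m ℓ) := by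
  refine base_mem_center (by simp [CommGroup.center_eq_top]) fun j => ?_
  obtain ⟨d, rfl⟩ := hc j
  exact CircularAmalgam.hub_circularEdge_mem_center (m j) (ℓ j) d

theorem isRotationSystem (m ℓ : Fin h → ℕ) :
    IsRotationSystem m ℓ (hub m ℓ (1, ofAdd 1)) (hub m ℓ (ofAdd 1, 1))
      fun j => leaf m ℓ j (ofAdd 1, 1) where
  commute_delta := (Commute.all _ _).map _
  commute_pow j := by
    have hpow : hub m ℓ (1, ofAdd 1) ^ m j = leaf m ℓ j (1, ofAdd 1) := by
      simpa [circularEdge_true_apply, circularEdge_false_apply, ← map_pow] using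
        (leaf_circularEdge (m := m) (ℓ := ℓ) j (1, ofAdd 1)).symm
    rw [hpow]
    exact (Commute.all _ _).map _
  pow_eq j := by
    rw [← map_pow, ← map_pow, ← map_mul]
    simpa [circularEdge_true_apply, circularEdge_false_apply] using
      leaf_circularEdge (m := m) (ℓ := ℓ) j (ofAdd 1, 1)

theorem exists_isConj_factor (j₀ : Fin h) (hm : ∀ j, 0 < m j) (hℓ : ∀ j, 0 < ℓ j)
    {x : HosoAmalgam m ℓ} {p : ℤ} (hp : p ≠ 0) {c : IntPair}
    (hc : hub m ℓ c ∈ Subgroup.center (HosoAmalgam m ℓ)) (hx : x ^ p = hub m ℓ c) :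
    ∃ j g, IsConj x (factor m ℓ j g) :=
  have : Nonempty (Fin h) := ⟨j₀⟩
  exists_isConj_of_of_zpow_eq_base (fun j => CircularAmalgam.hub_injective (hm j) (hℓ j)) hp hc hx

theorem exists_isConj_of_zpow_eq (j₀ : Fin h) (hm : ∀ j, 0 < m j) (hℓ : ∀ j, 0 < ℓ j)
    {x : HosoAmalgam m ℓ} {p q : ℤ} (hp : p ≠ 0) (hx : x ^ p = hub m ℓ (ofAdd q, 1)) :
    (∃ c, IsConj x (hub m ℓ c)) ∨ ∃ j c, IsConj x (leaf m ℓ j c) := by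
  obtain ⟨N, hN, hmN⟩ : ∃ N : ℤ, N ≠ 0 ∧ ∀ j, (m j : ℤ) ∣ N :=
    ⟨∏ j, (m j : ℤ), Finset.prod_ne_zero_iff.2 fun j _ => by exact_mod_cast (hm j).ne',
      fun j => Finset.dvd_prod_of_mem _ (Finset.mem_univ j)⟩
  have hedge (j : Fin h) : ∃ c, circularEdge (m j) (ℓ j) false c = (ofAdd (q * N), 1) :=
    exists_circularEdge_false_eq (ℓ j) ((hmN j).mul_left q)
  have hcenter := hub_mem_center hedge
  have hxN : x ^ (p * N) = hub m ℓ (ofAdd (q * N), 1) := by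
    rw [zpow_mul, hx, ← map_zpow, Prod.pow_mk, one_zpow, Int.ofAdd_mul]
  obtain ⟨j, g, hxg⟩ := exists_isConj_factor j₀ hm hℓ (mul_ne_zero hp hN) hcenter hxN
  obtain ⟨c, hc⟩ := hedge j
  have hgN : g ^ (p * N) =
      CircularAmalgam.hub (m j) (ℓ j) (circularEdge (m j) (ℓ j) false c) := by
    apply factor_injective hm hℓ j
    obtain ⟨u, hu⟩ := isConj_iff.1 hxg
    rw [map_zpow, factor_hub, hc, ← hu, conj_zpow, hxN, Subgroup.mem_center_iff.1 hcenter,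
      mul_inv_cancel_right]
  rcases CircularAmalgam.exists_isConj_of_zpow_eq (hm j) (hℓ j) (mul_ne_zero hp hN) hgN with
    ⟨d, hgd⟩ | ⟨d, hgd⟩
  · exact .inl ⟨d, factor_hub (m := m) (ℓ := ℓ) j d ▸ hxg.trans ((factor m ℓ j).map_isConj hgd)⟩
  · exact .inr ⟨j, d, hxg.trans ((factor m ℓ j).map_isConj hgd)⟩

section Lift

variable {K : Type*} [Group K] {t D : K} {b : Fin h → K} (hs : IsRotationSystem m ℓ t D b)

/-- The restriction of `HosoAmalgam.lift` to the `j`-th circular amalgam. -/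
def liftFactor (j : Fin h) : CircularAmalgam (m j) (ℓ j) →* K :=
  CircularAmalgam.lift (pairHom (hs.commute_pow j)) (pairHom hs.commute_delta) fun c => by
    rw [circularEdge_true_apply, circularEdge_false_apply, pairHom_apply, pairHom_apply]
    simp only [toAdd_pow, toAdd_mul, nsmul_eq_mul]
    rw [zpow_mul, zpow_natCast, hs.pow_eq, (hs.commute_delta.pow_right _).mul_zpow, zpow_add,
      zpow_mul, zpow_mul, zpow_natCast, zpow_natCast, mul_assoc]

/-- The homomorphism out of the amalgam given by a rotation system. -/
def lift : HosoAmalgam m ℓ →* K :=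
  PushoutI.lift (φ := fun j => CircularAmalgam.hub (m j) (ℓ j)) (liftFactor hs)
    (pairHom hs.commute_delta) fun j => MonoidHom.ext fun c => by
      rw [MonoidHom.comp_apply, liftFactor, CircularAmalgam.lift_hub]

theorem lift_leaf (j : Fin h) (c : IntPair) :
    lift hs (leaf m ℓ j c) = b j ^ c.1.toAdd * (t ^ m j) ^ c.2.toAdd :=
  (PushoutI.lift_of (φ := fun j => CircularAmalgam.hub (m j) (ℓ j)) (liftFactor hs) _ _ _).trans
    (CircularAmalgam.lift_leaf _ _ _ c)

theorem lift_hub (c : IntPair) : lift hs (hub m ℓ c) = D ^ c.1.toAdd * t ^ c.2.toAdd :=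
  PushoutI.lift_base (φ := fun j => CircularAmalgam.hub (m j) (ℓ j)) (liftFactor hs) _ _ c

theorem lift_hom (x : HosoGroup h m ℓ) : lift hs ((isRotationSystem m ℓ).hom x) = hs.hom x := by
  refine DFunLike.congr_fun (f := (lift hs).comp (isRotationSystem m ℓ).hom)
    (hosoHom_ext fun j i => ?_) x
  obtain ⟨n, rfl⟩ := ZMod.intCast_surjective i
  simp [IsRotationSystem.hom_hosoGen, lift_leaf, lift_hub]

end Lift

end HosoAmalgam

/-- The extension `G ⋊ ⟨t⟩` of a hosohedral-type group `G` by its rotation. -/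
abbrev HosoExtension (m ℓ : Fin h → ℕ) := HosoGroup h m ℓ ⋊[hosoRotation m ℓ] Multiplicative ℤ

namespace HosoExtension

open SemidirectProduct (inl inr)

/-- The generator `t` of the rotation group. -/
def rotation (m ℓ : Fin h → ℕ) : HosoExtension m ℓ := inr (ofAdd 1)

/-- The element `b_j = a_{j,0} t`. -/
def root (m ℓ : Fin h → ℕ) (j : Fin h) : HosoExtension m ℓ :=
  inl (hosoGen h m ℓ j 0) * rotation m ℓ

theorem rotation_zpow (n : ℤ) : rotation m ℓ ^ n = inr (ofAdd n) := by
  rw [rotation, ← map_zpow, ← ofAdd_zsmul, smul_eq_mul, mul_one]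

theorem inl_hosoGen (j : Fin h) (i : ℤ) :
    inl (hosoGen h m ℓ j i) = rotation m ℓ ^ i * root m ℓ j * rotation m ℓ ^ (-i - 1) := by
  calc inl (hosoGen h m ℓ j i)
      = inl (hosoRotation m ℓ (ofAdd i) (hosoGen h m ℓ j 0)) := by simp [hosoRotation_hosoGen]
    _ = rotation m ℓ ^ i * inl (hosoGen h m ℓ j 0) * (rotation m ℓ ^ i)⁻¹ := by
      rw [SemidirectProduct.inl_aut, rotation_zpow, map_inv]
    _ = rotation m ℓ ^ i * root m ℓ j * rotation m ℓ ^ (-i - 1) := by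
      rw [root]
      group

theorem inl_hosoS (j : Fin h) (i : ℤ) (p : ℕ) :
    inl (hosoS h m ℓ j i p) = rotation m ℓ ^ i * root m ℓ j ^ p * rotation m ℓ ^ (-i - p) := by
  rw [map_hosoS, cyclicProd_of_intCast_eq (inl_hosoGen j)]

theorem isRotationSystem (m ℓ : Fin h → ℕ) (j₀ : Fin h) :
    IsRotationSystem m ℓ (rotation m ℓ) (inl (hosoDelta h m ℓ j₀)) (root m ℓ) where
  commute_delta := by
    have h₀ := inl_hosoS (m := m) (ℓ := ℓ) j₀ 0 (ℓ j₀)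
    have h₁ := inl_hosoS (m := m) (ℓ := ℓ) j₀ 1 (ℓ j₀)
    rw [hosoS_eq_hosoDelta j₀ j₀] at h₀ h₁
    rw [commute_iff_eq]
    nth_rw 1 [h₁]
    rw [h₀]
    group
  commute_pow j := by
    have h₀ := inl_hosoGen (m := m) (ℓ := ℓ) j 0
    have hm := inl_hosoGen (m := m) (ℓ := ℓ) j (m j)
    rw [Int.cast_natCast, ZMod.natCast_self, ← Int.cast_zero, h₀, sub_eq_add_neg, sub_eq_add_neg,
      zpow_add, zpow_add, ← mul_assoc, ← mul_assoc, mul_left_inj, neg_zero, zpow_zero, one_mul,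
      mul_one, zpow_neg, eq_mul_inv_iff_mul_eq, zpow_natCast] at hm
    exact hm
  pow_eq j := by
    rw [← hosoS_eq_hosoDelta j j₀ 0, ← Int.cast_zero, inl_hosoS]
    group

theorem isRotationSystem_hom (j₀ : Fin h) (x : HosoGroup h m ℓ) :
    (isRotationSystem m ℓ j₀).hom x = inl x := by
  refine DFunLike.congr_fun (hosoHom_ext fun j i => ?_) x
  obtain ⟨n, rfl⟩ := ZMod.intCast_surjective i
  rw [IsRotationSystem.hom_hosoGen, inl_hosoGen]

theorem root_zpow_right (j : Fin h) (e : ℤ) : (root m ℓ j ^ e).right = ofAdd e :=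
  (map_zpow (SemidirectProduct.rightHom (φ := hosoRotation m ℓ)) _ e).trans <| by
    simp [root, rotation, ← ofAdd_zsmul]

end HosoExtension

open HosoExtension SemidirectProduct

/-- The element `b_j ^ e t ^ (-e)` of a hosohedral-type group, where `b_j = a_{j,0} t`. It is
`s_j(0, e)` for `e ≥ 0`, and both `Δ` and `s_j(0, m_j)` have their powers among these elements. -/
def hosoTurn (m ℓ : Fin h → ℕ) (j : Fin h) (e : ℤ) : HosoGroup h m ℓ := (root m ℓ j ^ e).left

theorem inl_hosoTurn (j : Fin h) (e : ℤ) :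
    inl (hosoTurn m ℓ j e) = root m ℓ j ^ e * rotation m ℓ ^ (-e) := by
  rw [zpow_neg, eq_mul_inv_iff_mul_eq, rotation_zpow, ← root_zpow_right j e]
  exact inl_left_mul_inr_right _

theorem hosoTurn_natCast (j : Fin h) (n : ℕ) : hosoTurn m ℓ j n = hosoS h m ℓ j 0 n := by
  apply inl_injective (φ := hosoRotation m ℓ)
  rw [inl_hosoTurn, ← Int.cast_zero, inl_hosoS]
  simp

theorem hosoTurn_neg_natCast (j : Fin h) (n : ℕ) :
    hosoTurn m ℓ j (-n) = (hosoS h m ℓ j (-n : ℤ) n)⁻¹ := by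
  apply inl_injective (φ := hosoRotation m ℓ)
  rw [inl_hosoTurn, map_inv, inl_hosoS]
  group

theorem hosoTurn_mem_hosoFactor (j : Fin h) (e : ℤ) : hosoTurn m ℓ j e ∈ hosoFactor h m ℓ j := by
  obtain ⟨n, rfl | rfl⟩ := e.eq_nat_or_neg
  · exact hosoTurn_natCast j n ▸ hosoS_mem_hosoFactor j 0 n
  · exact hosoTurn_neg_natCast j n ▸ inv_mem (hosoS_mem_hosoFactor j _ n)

theorem hosoDelta_zpow (j₀ j : Fin h) (k : ℤ) :
    hosoDelta h m ℓ j₀ ^ k = hosoTurn m ℓ j (ℓ j * k) := by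
  have hs := isRotationSystem m ℓ j₀
  apply inl_injective (φ := hosoRotation m ℓ)
  rw [inl_hosoTurn, map_zpow, zpow_neg, eq_mul_inv_iff_mul_eq, zpow_mul, zpow_mul, zpow_natCast,
    zpow_natCast, hs.pow_eq, (hs.commute_delta.pow_right _).mul_zpow]

theorem isConj_hosoDelta_zpow_of_isConj_inl (j₀ : Fin h) {x : HosoGroup h m ℓ} {a c : ℤ}
    (hx : IsConj (inl x : HosoExtension m ℓ)
      (inl (hosoDelta h m ℓ j₀) ^ a * rotation m ℓ ^ c)) :
    IsConj x (hosoDelta h m ℓ j₀ ^ a) := by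
  rw [← map_zpow, rotation_zpow] at hx
  obtain rfl : c = 0 := by
    simpa only [mul_right, right_inl, right_inr, one_mul, ofAdd_eq_one] using
      right_eq_one_of_isConj_inl hx
  refine isConj_of_isConj_inl (by simpa using hx) fun g => ⟨inr g, right_inr g, ?_⟩
  have hg := rotation_zpow (m := m) (ℓ := ℓ) g.toAdd
  rw [ofAdd_toAdd] at hg
  rw [map_zpow, ← hg]
  exact ((isRotationSystem m ℓ j₀).commute_delta.symm.zpow_left _).zpow_right _

theorem isConj_hosoTurn_of_isConj_inl (j : Fin h) {x : HosoGroup h m ℓ} {a c : ℤ}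
    (hx : IsConj (inl x : HosoExtension m ℓ)
      (root m ℓ j ^ a * (rotation m ℓ ^ m j) ^ c)) :
    IsConj x (hosoTurn m ℓ j a) := by
  have hcomm := (isRotationSystem m ℓ j).commute_pow j
  have hpow : (rotation m ℓ ^ m j) ^ c = rotation m ℓ ^ (m j * c) := by
    rw [zpow_mul, zpow_natCast]
  have hac : m j * c = -a := by
    have := right_eq_one_of_isConj_inl hx
    rw [hpow, mul_right, root_zpow_right, rotation_zpow, right_inr, ← ofAdd_add, ofAdd_eq_one]
      at this
    omega
  have hturn : inl (hosoTurn m ℓ j a) = root m ℓ j ^ a * (rotation m ℓ ^ m j) ^ c := by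
    rw [inl_hosoTurn, hpow, hac]
  refine isConj_of_isConj_inl (hturn ▸ hx) fun g =>
    ⟨root m ℓ j ^ g.toAdd, root_zpow_right j g.toAdd, ?_⟩
  rw [hturn]
  exact ((Commute.refl _).zpow_zpow _ _).mul_right (hcomm.zpow_zpow _ _)

theorem exists_isConj_hosoTurn (hm : ∀ j, 0 < m j) (hℓ : ∀ j, 0 < ℓ j) (j₀ : Fin h) {p q : ℤ}
    (hp : p ≠ 0) {x : HosoGroup h m ℓ} (hx : x ^ p = hosoDelta h m ℓ j₀ ^ q) :
    ∃ j e, IsConj x (hosoTurn m ℓ j e) := by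
  have hs := isRotationSystem m ℓ j₀
  have hmap {v} (hxv : IsConj ((HosoAmalgam.isRotationSystem m ℓ).hom x) v) :
      IsConj (inl x) (HosoAmalgam.lift hs v) := by
    simpa only [HosoAmalgam.lift_hom, isRotationSystem_hom] using
      (HosoAmalgam.lift hs).map_isConj hxv
  have hpow : (HosoAmalgam.isRotationSystem m ℓ).hom x ^ p = HosoAmalgam.hub m ℓ (ofAdd q, 1) := by
    rw [← map_zpow, hx, map_zpow, IsRotationSystem.hom_hosoDelta, ← map_zpow]
    simp [← ofAdd_zsmul]
  rcases HosoAmalgam.exists_isConj_of_zpow_eq j₀ hm hℓ hp hpow with ⟨c, hc⟩ | ⟨j, c, hc⟩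
  · exact ⟨j₀, _, hosoDelta_zpow j₀ j₀ _ ▸
      isConj_hosoDelta_zpow_of_isConj_inl j₀ (HosoAmalgam.lift_hub hs c ▸ hmap hc)⟩
  · exact ⟨j, _, isConj_hosoTurn_of_isConj_inl j (HosoAmalgam.lift_leaf hs j c ▸ hmap hc)⟩

section Length

variable {K : Type*} [Group K]

/-- The homomorphism sending all the generators `a_{j,i}` of the `j`-th factor to `w j`. -/
def hosoConstLift (w : Fin h → K) (hw : ∀ j j', w j ^ ℓ j = w j' ^ ℓ j') : HosoGroup h m ℓ →* K :=
  hosoLift (fun j _ => w j) fun j j' _ _ => by simpa only [cyclicProd_const] using hw j j'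

theorem hosoConstLift_hosoTurn (w : Fin h → K) (hw : ∀ j j', w j ^ ℓ j = w j' ^ ℓ j') (j : Fin h)
    (e : ℤ) : hosoConstLift w hw (hosoTurn m ℓ j e) = w j ^ e := by
  have hS (i : ZMod (m j)) (n : ℕ) : hosoConstLift w hw (hosoS h m ℓ j i n) = w j ^ n := by
    simp only [map_hosoS, hosoConstLift, hosoLift_hosoGen, cyclicProd_const]
  obtain ⟨n, rfl | rfl⟩ := e.eq_nat_or_neg
  · rw [hosoTurn_natCast, hS, zpow_natCast]
  · rw [hosoTurn_neg_natCast, map_inv, hS, zpow_neg, zpow_natCast]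

/-- The number of letters `a_{j,i}` with the given `j` in an element, modulo `ℓ_j`. -/
def hosoCount (m ℓ : Fin h → ℕ) (j : Fin h) : HosoGroup h m ℓ →* Multiplicative (ZMod (ℓ j)) :=
  hosoConstLift (Pi.mulSingle j (ofAdd 1)) <| by
    suffices ∀ i, (Pi.mulSingle j (ofAdd 1) : Fin h → Multiplicative (ZMod (ℓ j))) i ^ ℓ i = 1 from
      fun i i' => (this i).trans (this i').symm
    intro i
    obtain rfl | hij := eq_or_ne i j
    · simp [← ofAdd_nsmul]
    · simp [hij]

theorem hosoFactor_le_ker_hosoCount {i j : Fin h} (hij : i ≠ j) :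
    hosoFactor h m ℓ i ≤ (hosoCount m ℓ j).ker := by
  rw [hosoFactor, Subgroup.closure_le]
  rintro _ ⟨k, rfl⟩
  exact (hosoLift_hosoGen _ _ i k).trans (by simp [hij])

theorem dvd_of_isConj_hosoTurn {i j : Fin h} (hij : i ≠ j) {e : ℤ} {x : HosoGroup h m ℓ}
    (hx : x ∈ hosoFactor h m ℓ i) (hxe : IsConj x (hosoTurn m ℓ j e)) : (ℓ j : ℤ) ∣ e := by
  have hcount := isConj_iff_eq.1 ((hosoCount m ℓ j).map_isConj hxe)
  rw [hosoFactor_le_ker_hosoCount hij hx, hosoCount, hosoConstLift_hosoTurn] at hcount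
  rw [← ZMod.intCast_zmod_eq_zero_iff_dvd]
  simpa [← ofAdd_zsmul] using hcount.symm

theorem exists_isConj_hosoTurn_of_mem_hosoFactor (hm : ∀ j, 0 < m j) (hℓ : ∀ j, 0 < ℓ j)
    {j₀ j : Fin h} {p q : ℤ} (hp : p ≠ 0) {x x' : HosoGroup h m ℓ}
    (hx : x ^ p = hosoDelta h m ℓ j₀ ^ q) (hx' : x' ∈ hosoFactor h m ℓ j) (hxx' : IsConj x x') :
    ∃ e, IsConj x (hosoTurn m ℓ j e) := by
  obtain ⟨i, e, hxe⟩ := exists_isConj_hosoTurn hm hℓ j₀ hp hx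
  obtain rfl | hij := eq_or_ne j i
  · exact ⟨e, hxe⟩
  · obtain ⟨k, rfl⟩ := dvd_of_isConj_hosoTurn hij hx' (hxx'.symm.trans hxe)
    exact ⟨ℓ j * k, by rwa [← hosoDelta_zpow j₀] at hxe ⊢⟩

/-- The length of an element, normalized so that `Δ` has length one. -/
def hosoLength (m : Fin h → ℕ) (hℓ : ∀ j, 0 < ℓ j) : HosoGroup h m ℓ →* Multiplicative ℚ :=
  hosoConstLift (fun j => ofAdd (ℓ j : ℚ)⁻¹) fun j j' => by
    simp [← ofAdd_nsmul, (hℓ j).ne', (hℓ j').ne']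

theorem isConj_of_isConj_hosoTurn (hℓ : ∀ j, 0 < ℓ j) {p : ℤ} (hp : p ≠ 0)
    {x y : HosoGroup h m ℓ} (hxy : x ^ p = y ^ p) {j : Fin h} {e e' : ℤ}
    (hx : IsConj x (hosoTurn m ℓ j e)) (hy : IsConj y (hosoTurn m ℓ j e')) : IsConj x y := by
  have hlength : hosoLength m hℓ x = hosoLength m hℓ y :=
    zpow_left_injective hp (by simp only [← map_zpow, hxy])
  rw [isConj_iff_eq.1 ((hosoLength m hℓ).map_isConj hx),
    isConj_iff_eq.1 ((hosoLength m hℓ).map_isConj hy), hosoLength, hosoConstLift_hosoTurn,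
    hosoConstLift_hosoTurn] at hlength
  obtain rfl : e = e' := by simpa [← ofAdd_zsmul, (hℓ j).ne'] using hlength
  exact hx.trans hy.symm

end Length

end Hoso

/-- Two `(p,q)`-periodic elements of a hosohedral-type group are conjugate if and only if
they both admit a conjugate lying in the same factor subgroup. -/
theorem periodic_hoso_conjugacy (h : ℕ) (m ℓ : Fin h → ℕ) (hh : 0 < h)
    (hm : ∀ j, 0 < m j) (hℓ : ∀ j, 0 < ℓ j) (hne : ∀ j, (m j, ℓ j) ≠ (1, 1))
    (p : ℤ) (hp : p ≠ 0) (q : ℤ) (x y : HosoGroup h m ℓ)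
    (hx : x ^ p = (hosoDelta h m ℓ ⟨0, hh⟩) ^ q)
    (hy : y ^ p = (hosoDelta h m ℓ ⟨0, hh⟩) ^ q) :
    IsConj x y ↔ ∃ j : Fin h,
      (∃ x' ∈ hosoFactor h m ℓ j, IsConj x x') ∧
      (∃ y' ∈ hosoFactor h m ℓ j, IsConj y y') := by
  constructor
  · intro hxy
    obtain ⟨j, e, hxe⟩ := exists_isConj_hosoTurn hm hℓ _ hp hx
    have hmem := hosoTurn_mem_hosoFactor (m := m) (ℓ := ℓ) j e
    exact ⟨j, ⟨_, hmem, hxe⟩, ⟨_, hmem, hxy.symm.trans hxe⟩⟩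
  · rintro ⟨j, ⟨x', hx', hxx'⟩, ⟨y', hy', hyy'⟩⟩
    obtain ⟨e, hxe⟩ := exists_isConj_hosoTurn_of_mem_hosoFactor hm hℓ hp hx hx' hxx'
    obtain ⟨e', hye'⟩ := exists_isConj_hosoTurn_of_mem_hosoFactor hm hℓ hp hy hy' hyy'
    exact isConj_of_isConj_hosoTurn hℓ hp (hx.trans hy.symm) hxe hye'
end

section
/- Let G be the hosohedral-type group associated to pairs (m_1,ℓ_1),…,(m_h,ℓ_h), and for each j set d_j = gcd(m_j,ℓ_j). Then the abelianization of G is isomorphic to ℤ^r × T for some finite abelian group T, where r = 1 + Σ_{j=1}^h (d_j − 1); that is, the free part of G^{ab} has rank 1 + Σ_{j=1}^h (d_j − 1). -/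
/-!
The rank of a finitely generated abelian group `A` is the dimension over `ℚ` of `Hom(A, ℚ)`. For the
abelianization of the hosohedral-type group, such a homomorphism is a family of rational numbers
`f(j, i)` respecting the relations. Comparing consecutive words, the circular relations say that
`f(j, ·)` is `ℓ_j`-periodic on `ℤ/m_j`, i.e. comes from a function `y_j` on `ℤ/d_j` with
`d_j = gcd(m_j, ℓ_j)`. The remaining relations then say that the numbers `(ℓ_j / d_j) ∑_c y_j(c)` do
not depend on `j`. These `h` linear forms in `∑ d_j` variables are linearly independent, so the
dimension is `∑ d_j - (h - 1)`.
-/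

open Module

universe u

section FinitelyGenerated

theorem nonempty_linearEquiv_free_prod_torsion (R M : Type*) [CommRing R] [IsDomain R]
    [IsPrincipalIdealRing R] [AddCommGroup M] [Module R M] [Module.Finite R M] :
    Nonempty (M ≃ₗ[R] (Fin (finrank R M) → R) × Submodule.torsion R M) := by
  let T := Submodule.torsion R M
  obtain ⟨s, hs⟩ := projective_lifting_property T.mkQ LinearMap.id T.mkQ_surjective
  let split : (T × (M ⧸ T)) ≃ₗ[R] M :=
    lequivProdOfRightSplitExact T.injective_subtype (by simp) hs
  let free : (M ⧸ T) ≃ₗ[R] (Fin (finrank R M) → R) :=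
    (finBasisOfFinrankEq R _ (finrank_quotient_eq_of_le_torsion le_rfl)).equivFun
  exact ⟨split.symm ≪≫ₗ LinearEquiv.prodComm R _ _ ≪≫ₗ free.prodCongr (LinearEquiv.refl R T)⟩

theorem exists_mulEquiv_int_prod_finite (G : Type u) [CommGroup G] [Group.FG G] :
    ∃ (T : Type u) (_ : CommGroup T) (_ : Finite T),
      Nonempty (G ≃* Multiplicative (Fin (finrank ℤ (Additive G)) → ℤ) × T) := by
  have : Module.Finite ℤ (Additive G) := Module.Finite.iff_addGroup_fg.2 inferInstance
  obtain ⟨e⟩ := nonempty_linearEquiv_free_prod_torsion ℤ (Additive G)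
  have : Finite (Submodule.torsion ℤ (Additive G)) :=
    finite_of_fg_torsion _ Submodule.torsion_isTorsion
  exact ⟨Multiplicative (Submodule.torsion ℤ (Additive G)), inferInstance, inferInstance,
    ⟨(AddEquiv.toMultiplicativeRight e.toAddEquiv).trans (MulEquiv.prodMultiplicative _ _)⟩⟩

theorem finrank_linearMap_fractionRing (R K M : Type*) [CommRing R] [IsDomain R] [Field K]
    [Algebra R K] [IsFractionRing R K] [AddCommGroup M] [Module R M] :
    finrank K (M →ₗ[R] K) = finrank R M := by
  calc
    finrank K (M →ₗ[R] K) = finrank K (Dual K (TensorProduct R K M)) :=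
      (LinearMap.liftBaseChangeEquiv K).finrank_eq
    _ = finrank K (TensorProduct R K M) := Subspace.dual_finrank_eq
    _ = finrank R (TensorProduct R K M) := IsFractionRing.finrank_right_eq R K _
    _ = finrank R M :=
      IsLocalizedModule.finrank_eq (nonZeroDivisors R) (TensorProduct.mk R K M 1) le_rfl

end FinitelyGenerated

section PresentedGroup

variable {α : Type*} {rels : Set (FreeGroup α)} {V : Type*} [AddCommGroup V]

variable (rels V) in
/-- The map recording the values on the generators of an additive map from the abelianization of a
presented group to `V`, linear over any semiring `S` of scalars of `V`. -/
def evalGenerators (S : Type*) [Semiring S] [Module S V] :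
    (Additive (Abelianization (PresentedGroup rels)) →ₗ[ℤ] V) →ₗ[S] (α → V) where
  toFun φ x := φ (.ofMul (.of (.of x)))
  map_add' _ _ := rfl
  map_smul' _ _ := rfl

variable {S : Type*} [Semiring S] [Module S V]

theorem evalGenerators_injective : Function.Injective (evalGenerators rels V S) := by
  intro φ ψ hφψ
  apply LinearMap.toAddMonoidHom_injective
  apply MonoidHom.toAdditiveLeft.symm.injective
  apply Abelianization.hom_ext
  apply PresentedGroup.ext
  exact fun x ↦ congrArg Multiplicative.ofAdd (congrFun hφψ x)

theorem mem_range_evalGenerators {f : α → V} :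
    f ∈ LinearMap.range (evalGenerators rels V S) ↔
      ∀ r ∈ rels, FreeGroup.lift (Multiplicative.ofAdd ∘ f) r = 1 := by
  constructor
  · rintro ⟨φ, rfl⟩ r hr
    let ψ : PresentedGroup rels →* Multiplicative V :=
      (MonoidHom.toAdditiveLeft.symm φ.toAddMonoidHom).comp Abelianization.of
    have hψ : FreeGroup.lift (Multiplicative.ofAdd ∘ evalGenerators rels V S φ) =
        ψ.comp (PresentedGroup.mk rels) := FreeGroup.ext_hom _ _ fun x ↦ FreeGroup.lift_apply_of
    rw [hψ, MonoidHom.comp_apply, PresentedGroup.one_of_mem hr, map_one]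
  · intro hf
    let ψ := Abelianization.lift (PresentedGroup.toGroup hf)
    refine ⟨(MonoidHom.toAdditiveLeft ψ).toIntLinearMap, funext fun x ↦ ?_⟩
    simp [evalGenerators, ψ]

instance fg_abelianization_presentedGroup [Finite α] :
    Group.FG (Abelianization (PresentedGroup rels)) :=
  Group.fg_of_surjective (f := Abelianization.of.comp (PresentedGroup.mk rels))
    (QuotientGroup.mk_surjective.comp (PresentedGroup.mk_surjective rels))

end PresentedGroup

section ZMod

theorem periodic_iff_exists_eq_comp_castHom {A : Type*} {m ℓ : ℕ} {f : ZMod m → A} :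
    Function.Periodic f ℓ ↔
      ∃ g : ZMod (m.gcd ℓ) → A, f = g ∘ ZMod.castHom (m.gcd_dvd_left ℓ) _ := by
  constructor
  · intro hf
    have : Nonempty A := ⟨f 0⟩
    refine (Function.factorsThrough_iff f).1 fun x y hxy ↦ ?_
    obtain ⟨a, rfl⟩ := ZMod.intCast_surjective x
    obtain ⟨b, rfl⟩ := ZMod.intCast_surjective y
    rw [map_intCast, map_intCast, ZMod.intCast_eq_intCast_iff_dvd_sub] at hxy
    obtain ⟨t, ht⟩ := hxy
    have hb : (b : ZMod m) = a + (m.gcdB ℓ * t) • (ℓ : ZMod m) := by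
      rw [Nat.gcd_eq_gcd_ab, sub_eq_iff_eq_add'] at ht
      simp only [ht, Int.cast_add, Int.cast_mul, Int.cast_natCast, CharP.cast_eq_zero, zsmul_eq_mul]
      ring
    rw [hb, hf.zsmul]
  · rintro ⟨g, rfl⟩ i
    have : (ℓ : ZMod (m.gcd ℓ)) = 0 := (ZMod.natCast_eq_zero_iff _ _).2 (m.gcd_dvd_right ℓ)
    rw [Function.comp_apply, map_add, map_natCast, this, add_zero, Function.comp_apply]

theorem sum_range_natCast_zmod {A : Type*} [AddCommMonoid A] {d : ℕ} [NeZero d] (g : ZMod d → A)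
    {n : ℕ} (hn : d ∣ n) : ∑ k ∈ Finset.range n, g k = (n / d) • ∑ c, g c := by
  have hd : ∑ k ∈ Finset.range d, g k = ∑ c, g c := by
    obtain ⟨n, rfl⟩ := Nat.exists_eq_succ_of_ne_zero (NeZero.ne d)
    rw [Finset.sum_range]
    exact Fintype.sum_congr _ _ fun c ↦ congrArg g (Fin.cast_val_eq_self c)
  obtain ⟨q, rfl⟩ := hn
  rw [Nat.mul_div_cancel_left q (NeZero.pos d)]
  induction q with
  | zero => simp
  | succ q ih => simp [Nat.mul_succ, Finset.sum_range_add, ih, hd, succ_nsmul]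

theorem sum_range_eq_sum_range_shift_iff {R A : Type*} [AddCommGroupWithOne R] [AddCommGroup A]
    (f : R → A) (ℓ : ℕ) (i : R) :
    ∑ k ∈ Finset.range ℓ, f (i + k) = ∑ k ∈ Finset.range ℓ, f (i + 1 + k) ↔ f (i + ℓ) = f i := by
  have key : ∑ k ∈ Finset.range ℓ, f (i + k) + f (i + ℓ)
      = ∑ k ∈ Finset.range ℓ, f (i + 1 + k) + f i := by
    rw [← Finset.sum_range_succ (fun k : ℕ ↦ f (i + k)), Finset.sum_range_succ']
    simp [add_assoc, add_comm (1 : R)]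
  constructor <;> intro hs
  · rw [hs] at key
    exact add_left_cancel key
  · rw [hs] at key
    exact add_right_cancel key

end ZMod

section BlockSums

variable {R K ι : Type*} [CommSemiring R] [Field K] {α : ι → Type*} [∀ j, Fintype (α j)]

variable (α) in
/-- The linear map sending a family of scalars indexed by a disjoint union of blocks to the
vector of its block sums, the `j`-th sum being multiplied by `w j`. It describes the images of the
Garside elements, with `w j` the number of times that `ℓ j` consecutive indices run through the
residues modulo `gcd(m j, ℓ j)`. -/
def weightedBlockSum (w : ι → R) : ((Σ j, α j) → R) →ₗ[R] (ι → R) where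
  toFun y j := w j * ∑ c, y ⟨j, c⟩
  map_add' y z := by ext j; simp [Finset.sum_add_distrib, mul_add]
  map_smul' a y := by ext j; simp [← Finset.mul_sum, mul_left_comm]

theorem weightedBlockSum_surjective [∀ j, Nonempty (α j)] {w : ι → K} (hw : ∀ j, w j ≠ 0) :
    Function.Surjective (weightedBlockSum α w) := by
  classical
  intro z
  let c₀ (j : ι) : α j := Classical.arbitrary (α j)
  let y : (Σ j, α j) → K := fun x ↦ if x.2 = c₀ x.1 then (w x.1)⁻¹ * z x.1 else 0
  have hy (j : ι) : ∑ c, y ⟨j, c⟩ = (w j)⁻¹ * z j :=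
    (Fintype.sum_eq_single (c₀ j) fun c hc ↦ if_neg hc).trans (if_pos rfl)
  exact ⟨y, funext fun j ↦ by simp [weightedBlockSum, hy, hw j]⟩

theorem mem_span_one_iff {v : ι → R} : v ∈ R ∙ (1 : ι → R) ↔ ∀ j j', v j = v j' := by
  rw [Submodule.mem_span_singleton]
  constructor
  · rintro ⟨a, rfl⟩ _ _
    rfl
  · intro hv
    cases isEmpty_or_nonempty ι
    · exact ⟨0, Subsingleton.elim _ _⟩
    · exact ⟨v (Classical.arbitrary ι), funext fun j ↦ by simpa using hv _ j⟩

theorem finrank_comap_weightedBlockSum_span_one [Fintype ι] [Nonempty ι]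
    [∀ j, Nonempty (α j)] {w : ι → K} (hw : ∀ j, w j ≠ 0) :
    finrank K ((K ∙ (1 : ι → K)).comap (weightedBlockSum α w)) =
      1 + ∑ j, (Fintype.card (α j) - 1) := by
  let L := K ∙ (1 : ι → K)
  change finrank K (L.comap (weightedBlockSum α w)) = _
  have hsurj : Function.Surjective (L.mkQ ∘ₗ weightedBlockSum α w) :=
    L.mkQ_surjective.comp (weightedBlockSum_surjective hw)
  have hnull := (L.mkQ ∘ₗ weightedBlockSum α w).finrank_range_add_finrank_ker
  rw [LinearMap.range_eq_top.2 hsurj, finrank_top, LinearMap.ker_comp, L.ker_mkQ,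
    finrank_fintype_fun_eq_card, Fintype.card_sigma] at hnull
  have hquot : finrank K ((ι → K) ⧸ L) + 1 = Fintype.card ι := by
    rw [← finrank_span_singleton (K := K) (one_ne_zero (α := ι → K)),
      L.finrank_quotient_add_finrank, finrank_fintype_fun_eq_card]
  have hcard : ∑ j, Fintype.card (α j) = ∑ j, (Fintype.card (α j) - 1) + Fintype.card ι := by
    rw [Fintype.card_eq_sum_ones, ← Finset.sum_add_distrib]
    exact Finset.sum_congr rfl fun j _ ↦ (Nat.sub_add_cancel Fintype.card_pos).symm
  omega

end BlockSums

section HosoGroup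

variable {h : ℕ} {m ℓ : Fin h → ℕ}

instance neZero_gcd_right (a b : ℕ) [NeZero b] : NeZero (a.gcd b) :=
  ⟨(Nat.gcd_pos_of_pos_right a (NeZero.pos b)).ne'⟩

theorem lift_hosoWord {V : Type*} [AddCommGroup V] (f : (Σ j : Fin h, ZMod (m j)) → V) (j : Fin h)
    (i : ZMod (m j)) (p : ℕ) :
    FreeGroup.lift (Multiplicative.ofAdd ∘ f) (hosoWord h m j i p) =
      Multiplicative.ofAdd (∑ k ∈ Finset.range p, f ⟨j, i + k⟩) := by
  induction p with
  | zero => simp [hosoWord]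
  | succ p ih =>
    rw [Finset.sum_range_succ, ofAdd_add, ← ih]
    simp [hosoWord, List.range_succ]

theorem mem_range_evalGenerators_hosoRels {V S : Type*} [AddCommGroup V] [Semiring S] [Module S V]
    {f : (Σ j : Fin h, ZMod (m j)) → V} :
    f ∈ LinearMap.range (evalGenerators (hosoRels h m ℓ) V S) ↔
      (∀ j, Function.Periodic (fun i ↦ f ⟨j, i⟩) (ℓ j : ZMod (m j))) ∧
      ∀ j j', ∑ k ∈ Finset.range (ℓ j), f ⟨j, k⟩ = ∑ k ∈ Finset.range (ℓ j'), f ⟨j', k⟩ := by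
  have hword (j j' i i') :
      FreeGroup.lift (Multiplicative.ofAdd ∘ f)
        (hosoWord h m j i (ℓ j) * (hosoWord h m j' i' (ℓ j'))⁻¹) = 1 ↔
      ∑ k ∈ Finset.range (ℓ j), f ⟨j, i + k⟩ = ∑ k ∈ Finset.range (ℓ j'), f ⟨j', i' + k⟩ := by
    rw [map_mul, map_inv, mul_inv_eq_one, lift_hosoWord, lift_hosoWord,
      Multiplicative.ofAdd.injective.eq_iff]
  rw [mem_range_evalGenerators]
  constructor
  · intro hf
    refine ⟨fun j i ↦ (sum_range_eq_sum_range_shift_iff (fun i ↦ f ⟨j, i⟩) _ i).1 ?_, fun j j' ↦ ?_⟩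
    · exact (hword j j i (i + 1)).1 (hf _ (.inl ⟨j, i, rfl⟩))
    · simpa using (hword j j' 0 0).1 (hf _ (.inr ⟨j, j', rfl⟩))
  · rintro ⟨hper, hsum⟩ r (⟨j, i, rfl⟩ | ⟨j, j', rfl⟩)
    · exact (hword j j i (i + 1)).2
        ((sum_range_eq_sum_range_shift_iff (fun i ↦ f ⟨j, i⟩) _ i).2 (hper j i))
    · exact (hword j j' 0 0).2 (by simpa using hsum j j')

variable (m ℓ) in
/-- Reduction of the index `i` of a generator `a_{j,i}` modulo `gcd(m_j, ℓ_j)`, through which the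
values of a map to an abelian group factor. -/
def reduceModGcd : (Σ j : Fin h, ZMod (m j)) → Σ j : Fin h, ZMod ((m j).gcd (ℓ j)) :=
  Sigma.map id fun j ↦ ZMod.castHom ((m j).gcd_dvd_left (ℓ j)) (ZMod ((m j).gcd (ℓ j)))

theorem reduceModGcd_surjective : Function.Surjective (reduceModGcd m ℓ) :=
  Function.surjective_id.sigma_map fun _ ↦ ZMod.castHom_surjective _

theorem range_evalGenerators_hosoRels (K : Type*) [Field K] [∀ j, NeZero (ℓ j)] :
    LinearMap.range (evalGenerators (hosoRels h m ℓ) K K) =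
      ((K ∙ (1 : Fin h → K)).comap
        (weightedBlockSum (fun j ↦ ZMod ((m j).gcd (ℓ j)))
          fun j ↦ ((ℓ j / (m j).gcd (ℓ j) : ℕ) : K))).map
        (LinearMap.funLeft K K (reduceModGcd m ℓ)) := by
  have hsum (y : (Σ j, ZMod ((m j).gcd (ℓ j))) → K) (j : Fin h) :
      ∑ k ∈ Finset.range (ℓ j), y ⟨j, k⟩ =
        weightedBlockSum (fun j ↦ ZMod ((m j).gcd (ℓ j)))
          (fun j ↦ ((ℓ j / (m j).gcd (ℓ j) : ℕ) : K)) y j := by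
    rw [sum_range_natCast_zmod (fun c ↦ y ⟨j, c⟩) ((m j).gcd_dvd_right (ℓ j)), nsmul_eq_mul]
    rfl
  ext f
  rw [mem_range_evalGenerators_hosoRels, Submodule.mem_map]
  simp only [Submodule.mem_comap, mem_span_one_iff, ← hsum]
  constructor
  · rintro ⟨hper, hf⟩
    choose y hy using fun j ↦ periodic_iff_exists_eq_comp_castHom.1 (hper j)
    have hfy (j i) : f ⟨j, i⟩ = y j (ZMod.castHom ((m j).gcd_dvd_left (ℓ j)) _ i) :=
      congrFun (hy j) i
    refine ⟨fun x ↦ y x.1 x.2, fun j j' ↦ by simpa [hfy] using hf j j', ?_⟩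
    ext ⟨j, i⟩
    exact (hfy j i).symm
  · rintro ⟨y, hy, rfl⟩
    refine ⟨fun j ↦ periodic_iff_exists_eq_comp_castHom.2 ⟨fun c ↦ y ⟨j, c⟩, rfl⟩, fun j j' ↦ ?_⟩
    simpa [LinearMap.funLeft_apply, reduceModGcd, Sigma.map] using hy j j'

theorem finrank_abelianization_hosoGroup [NeZero h] [∀ j, NeZero (ℓ j)] :
    finrank ℤ (Additive (Abelianization (HosoGroup h m ℓ))) =
      1 + ∑ j, ((m j).gcd (ℓ j) - 1) := by
  have hw (j : Fin h) : ((ℓ j / (m j).gcd (ℓ j) : ℕ) : ℚ) ≠ 0 :=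
    Nat.cast_ne_zero.2 (Nat.div_ne_zero_iff_of_dvd ((m j).gcd_dvd_right (ℓ j)) |>.2
      ⟨NeZero.ne _, NeZero.ne _⟩)
  have hreduce : Function.Injective (LinearMap.funLeft ℚ ℚ (reduceModGcd m ℓ)) :=
    LinearMap.funLeft_injective_of_surjective ℚ ℚ _ reduceModGcd_surjective
  rw [← finrank_linearMap_fractionRing ℤ ℚ,
    ← LinearMap.finrank_range_of_inj (evalGenerators_injective (S := ℚ)),
    range_evalGenerators_hosoRels,
    ← (Submodule.equivMapOfInjective _ hreduce _).finrank_eq,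
    finrank_comap_weightedBlockSum_span_one hw]
  simp only [ZMod.card]

end HosoGroup

/-- The free part of the abelianization of a hosohedral-type group has rank
`1 + ∑ j (gcd(m_j, ℓ_j) - 1)`. -/
theorem abelianization_hosohedral (h : ℕ) (m ℓ : Fin h → ℕ) (hh : 0 < h)
    (hm : ∀ j, 0 < m j) (hℓ : ∀ j, 0 < ℓ j) (hne : ∀ j, (m j, ℓ j) ≠ (1, 1)) :
    ∃ (T : Type) (_ : CommGroup T) (_ : Finite T),
      Nonempty (Abelianization (HosoGroup h m ℓ) ≃*
        Multiplicative (Fin (1 + ∑ j : Fin h, (Nat.gcd (m j) (ℓ j) - 1)) → ℤ) × T) := by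
  have (j : Fin h) : NeZero (m j) := ⟨(hm j).ne'⟩
  have (j : Fin h) : NeZero (ℓ j) := ⟨(hℓ j).ne'⟩
  have : NeZero h := ⟨hh.ne'⟩
  rw [← finrank_abelianization_hosoGroup]
  exact exists_mulEquiv_int_prod_finite _
end
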